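/- The Takeuchi element τ = Σ_F (−1)^{rk(F)} H_F of the Tits algebra ℝΣ[𝒜], where the sum is over ALL faces F of 𝒜, is characteristic of parameter −1; that is, for every flat X of 𝒜, Σ_{F : supp(F) ⊆ X} (−1)^{rk(F)} = (−1)^{rk(X)}. -/

import Mathlib

open Finset MeasureTheory

noncomputable section

namespace CharElts

/-- Ambient Euclidean space `ℝ^n`. -/
abbrev V (n : ℕ) := EuclideanSpace ℝ (Fin n)

/-- An affine functional on `ℝ^n`; a hyperplane is its zero set. -/
abbrev AffForm (n : ℕ) := V n →ᵃ[ℝ] ℝ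

/-- The hyperplane determined by an affine functional. -/
def hypSet {n : ℕ} (ℓ : AffForm n) : Set (V n) := {x | ℓ x = 0}

variable {n : ℕ} (𝒜 : Finset (AffForm n))

/-- Index type for the hyperplanes of the arrangement. -/
abbrev Idx := {ℓ : AffForm n // ℓ ∈ 𝒜}

/-- The (possibly empty) set cut out by a sign vector `σ`. -/
def faceSet (σ : Idx 𝒜 → SignType) : Set (V n) :=
  {x | ∀ ℓ : Idx 𝒜, SignType.sign (ℓ.1 x) = σ ℓ}

/-- A face of the arrangement: a sign vector whose face set is nonempty. -/
@[ext] structure Face where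
  sgn : Idx 𝒜 → SignType
  nonempty : (faceSet 𝒜 sgn).Nonempty

open Classical in
instance : Fintype (Face 𝒜) :=
  Fintype.ofInjective Face.sgn (fun F G h => by cases F; cases G; simpa using h)

/-- The underlying point set of a face. -/
def Face.carrier (F : Face 𝒜) : Set (V n) := faceSet 𝒜 F.sgn

/-- A flat: a nonempty intersection of some subcollection of the hyperplanes
(the empty intersection gives all of `ℝ^n`). -/
def IsFlat (X : Set (V n)) : Prop :=
  X.Nonempty ∧ ∃ P : Idx 𝒜 → Prop, X = ⋂ ℓ ∈ {ℓ : Idx 𝒜 | P ℓ}, hypSet ℓ.1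

/-- The poset of flats, ordered by inclusion. -/
def Flat := {X : Set (V n) // IsFlat 𝒜 X}

instance : PartialOrder (Flat 𝒜) :=
  inferInstanceAs (PartialOrder {X : Set (V n) // IsFlat 𝒜 X})

lemma flat_eq_inter (X : Flat 𝒜) :
    X.1 = ⋂ ℓ ∈ {ℓ : Idx 𝒜 | X.1 ⊆ hypSet ℓ.1}, hypSet ℓ.1 := by
  obtain ⟨Z, hne, P, rfl⟩ := X
  apply subset_antisymm
  · intro x hx
    simp only [Set.mem_iInter, Set.mem_setOf_eq]
    intro ℓ hℓ
    exact hℓ hx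
  · intro x hx
    simp only [Set.mem_iInter, Set.mem_setOf_eq] at hx ⊢
    intro ℓ hℓ
    refine hx ℓ ?_
    intro y hy
    simp only [Set.mem_iInter, Set.mem_setOf_eq] at hy
    exact hy ℓ hℓ

open Classical in
instance : Fintype (Flat 𝒜) :=
  Fintype.ofInjective (fun X : Flat 𝒜 => {ℓ : Idx 𝒜 | X.1 ⊆ hypSet ℓ.1}) <| by
    intro X Y h
    dsimp only at h
    apply Subtype.ext
    rw [flat_eq_inter 𝒜 X, flat_eq_inter 𝒜 Y, h]

/-- The top flat: the whole ambient space. -/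
def topFlat : Flat 𝒜 :=
  ⟨Set.univ, ⟨⟨0, trivial⟩, fun _ => False, by simp⟩⟩

/-- The support of a face: the intersection of the hyperplanes on which it lies. -/
def supp (F : Face 𝒜) : Flat 𝒜 :=
  ⟨⋂ ℓ ∈ {ℓ : Idx 𝒜 | F.sgn ℓ = 0}, hypSet ℓ.1, by
    constructor
    · obtain ⟨x, hx⟩ := F.nonempty
      refine ⟨x, ?_⟩
      simp only [Set.mem_iInter, Set.mem_setOf_eq]
      intro ℓ hℓ
      have h0 := hx ℓ
      rw [hℓ] at h0
      simpa [hypSet, sign_eq_zero_iff] using h0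
    · exact ⟨fun ℓ => F.sgn ℓ = 0, rfl⟩⟩

/-- The dimension of (the affine hull of) a subset of `ℝ^n`. -/
def dimS (X : Set (V n)) : ℕ := Module.finrank ℝ (vectorSpan ℝ X)

open Classical in
/-- An element `w = Σ_F w^F H_F` of the Tits algebra (recorded by its coefficient
vector) is *characteristic of parameter `t`* if for every flat `X`, the sum of the
coefficients of the faces with support contained in `X` equals `t ^ rk X`,
where `rk X = dim X - d` and `d` is the common dimension of the minimal flats. -/
def IsCharacteristic (d : ℕ) (w : Face 𝒜 → ℝ) (t : ℝ) : Prop :=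
  ∀ X : Flat 𝒜,
    (∑ F : Face 𝒜, if (supp 𝒜 F).1 ⊆ X.1 then w F else 0) = t ^ (dimS X.1 - d)

/-- The sign vector of the Tits product `FG` of two faces. -/
def combineSgn {I : Type*} (σ τ : I → SignType) : I → SignType :=
  fun ℓ => if σ ℓ = 0 then τ ℓ else σ ℓ

open Classical in
/-- The product of the Tits algebra, on coefficient vectors:
`(u·v)^C = Σ_{F,G : FG = C} u^F v^G`, extending `H_F · H_G = H_{FG}` bilinearly. -/
def mulT (u v : Face 𝒜 → ℝ) : Face 𝒜 → ℝ :=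
  fun C => ∑ F : Face 𝒜, ∑ G : Face 𝒜,
    if combineSgn F.sgn G.sgn = C.sgn then u F * v G else 0

open Classical in
/-- The basis element `H_F` of the Tits algebra, as a coefficient vector. -/
def unitV (F : Face 𝒜) : Face 𝒜 → ℝ := fun G => if G = F then 1 else 0

/-- A chamber: a face whose sign vector is nowhere zero. -/
def IsChamber (F : Face 𝒜) : Prop := ∀ ℓ : Idx 𝒜, F.sgn ℓ ≠ 0

open Classical in
/-- `IsMoebius 𝒜 μ` states that `μ` is the Möbius function of the poset of
flats of `𝒜` (these conditions determine `μ` uniquely). -/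
def IsMoebius (μ : Flat 𝒜 → Flat 𝒜 → ℝ) : Prop :=
  (∀ X, μ X X = 1) ∧
  (∀ X Y : Flat 𝒜, X < Y →
    (∑ Z : Flat 𝒜, if X ≤ Z ∧ Z ≤ Y then μ X Z else 0) = 0) ∧
  (∀ X Y : Flat 𝒜, ¬ X ≤ Y → μ X Y = 0)

open Classical in
/-- `χ(𝒜^X, t) = Σ_{Y ≤ X} μ(Y, X) t^{rk Y}`: the characteristic polynomial of the
arrangement under the flat `X`.  Taking `X = ⊤` gives the characteristic
polynomial of `𝒜` itself. -/
def charPolyUnder (μ : Flat 𝒜 → Flat 𝒜 → ℝ) (d : ℕ) (X : Flat 𝒜) (t : ℝ) : ℝ :=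
  ∑ Y : Flat 𝒜, if Y ≤ X then μ Y X * t ^ (dimS Y.1 - d) else 0

/-- The space of directions `L = ⋂_{H ∈ 𝒜} dir(H)`: the intersection of the kernels of
the linear parts of the defining functionals. -/
def dirL : Submodule ℝ (V n) := ⨅ ℓ : Idx 𝒜, LinearMap.ker ℓ.1.linear

/-- A face is essentially bounded if its image in `ℝ^n / L` is bounded. -/
def EssBounded (F : Face 𝒜) : Prop :=
  Bornology.IsBounded ((dirL 𝒜).mkQ '' F.carrier)

/-- A hyperplane (zero set of a nonconstant affine functional) is nonempty. -/
lemma hyp_nonempty (ℓ : AffForm n) (h : ℓ.linear ≠ 0) : (hypSet ℓ).Nonempty := by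
  obtain ⟨v, hv⟩ : ∃ v, ℓ.linear v ≠ 0 := by
    by_contra hc
    push_neg at hc
    exact h (LinearMap.ext fun v => hc v)
  refine ⟨((-ℓ 0) / (ℓ.linear v)) • v, ?_⟩
  have hdecomp : ℓ (((-ℓ 0) / (ℓ.linear v)) • v)
      = ℓ.linear (((-ℓ 0) / (ℓ.linear v)) • v) + ℓ 0 := by
    conv_lhs => rw [show ((-ℓ 0) / (ℓ.linear v)) • v = ((-ℓ 0) / (ℓ.linear v)) • v +ᵥ (0 : V n)
      from (add_zero _).symm]
    rw [AffineMap.map_vadd]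
    rfl
  show ℓ _ = 0
  rw [hdecomp, LinearMap.map_smul, smul_eq_mul, div_mul_cancel₀ _ hv, neg_add_cancel]

/-- Convex sets which are open relative to the direction `W`. -/
structure RelOpen (C : Set (V n)) (W : Submodule ℝ (V n)) : Prop where
  conv : Convex ℝ C
  dir : ∀ x ∈ C, ∀ y ∈ C, y - x ∈ W
  opn : ∀ x ∈ C, ∀ w ∈ W, ∀ᶠ t in nhds (0 : ℝ), x + t • w ∈ C

lemma aff_line (ℓ : AffForm n) (x w : V n) (t : ℝ) :
    ℓ (x + t • w) = ℓ x + t * ℓ.linear w := by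
  have h := ℓ.map_vadd x (t • w)
  simp only [vadd_eq_add, map_smul, smul_eq_mul] at h
  rw [add_comm x, h, add_comm]

lemma aff_sub (ℓ : AffForm n) (x y : V n) : ℓ.linear (y - x) = ℓ y - ℓ x := by
  have h := aff_line ℓ x (y - x) 1
  rw [one_smul, one_mul, add_sub_cancel] at h
  rw [h]; ring

lemma tendsto_line (ℓ : AffForm n) (x w : V n) :
    Filter.Tendsto (fun t : ℝ => ℓ (x + t • w)) (nhds 0) (nhds (ℓ x)) := by
  have : Continuous (fun t : ℝ => ℓ x + t * ℓ.linear w) := by fun_prop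
  have h := this.tendsto 0
  simp only [zero_mul, add_zero] at h
  simpa only [aff_line] using h

lemma exists_pos_of_ev {p : ℝ → Prop} (h : ∀ᶠ t in nhds (0 : ℝ), p t) :
    ∃ t > 0, p t ∧ p (-t) := by
  obtain ⟨ε, hε, h⟩ := Metric.eventually_nhds_iff.1 h
  refine ⟨ε / 2, by positivity, h ?_, h ?_⟩ <;>
    simp [abs_of_pos hε, hε]

lemma mem_span_of_ev {C : Set (V n)} {x w : V n} (hx : x ∈ C)
    (h : ∀ᶠ t in nhds (0 : ℝ), x + t • w ∈ C) : w ∈ vectorSpan ℝ C := by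
  obtain ⟨t, ht, h1, -⟩ := exists_pos_of_ev h
  have h2 := vsub_mem_vectorSpan ℝ h1 hx
  simp only [vsub_eq_sub, add_sub_cancel_left] at h2
  have h3 := Submodule.smul_mem _ t⁻¹ h2
  rwa [smul_smul, inv_mul_cancel₀ ht.ne', one_smul] at h3

lemma RelOpen.dimS_eq {C : Set (V n)} {W : Submodule ℝ (V n)} (h : RelOpen C W)
    (hne : C.Nonempty) : dimS C = Module.finrank ℝ W := by
  obtain ⟨x, hx⟩ := hne
  have : vectorSpan ℝ C = W := by
    apply le_antisymm
    · rw [vectorSpan_def, Submodule.span_le]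
      rintro _ ⟨a, ha, b, hb, rfl⟩
      exact h.dir b hb a ha
    · intro w hw
      exact mem_span_of_ev hx (h.opn x hx w hw)
  rw [dimS, this]

lemma RelOpen.pos {C : Set (V n)} {W : Submodule ℝ (V n)} (h : RelOpen C W) (ℓ : AffForm n) :
    RelOpen (C ∩ {x | 0 < ℓ x}) W where
  conv := h.conv.inter ((convex_Ioi (0 : ℝ)).affine_preimage ℓ)
  dir x hx y hy := h.dir x hx.1 y hy.1
  opn x hx w hw := (h.opn x hx.1 w hw).and ((tendsto_line ℓ x w).eventually_const_lt hx.2)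

lemma RelOpen.neg {C : Set (V n)} {W : Submodule ℝ (V n)} (h : RelOpen C W) (ℓ : AffForm n) :
    RelOpen (C ∩ {x | ℓ x < 0}) W where
  conv := h.conv.inter ((convex_Iio (0 : ℝ)).affine_preimage ℓ)
  dir x hx y hy := h.dir x hx.1 y hy.1
  opn x hx w hw := (h.opn x hx.1 w hw).and ((tendsto_line ℓ x w).eventually_lt_const hx.2)

lemma RelOpen.zero {C : Set (V n)} {W : Submodule ℝ (V n)} (h : RelOpen C W) (ℓ : AffForm n) :
    RelOpen (C ∩ {x | ℓ x = 0}) (W ⊓ LinearMap.ker ℓ.linear) where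
  conv := h.conv.inter ((convex_singleton (0 : ℝ)).affine_preimage ℓ)
  dir x hx y hy := ⟨h.dir x hx.1 y hy.1, by
    have h1 : ℓ x = 0 := hx.2
    have h2 : ℓ y = 0 := hy.2
    show ℓ.linear (y - x) = 0
    rw [aff_sub, h1, h2, sub_zero]⟩
  opn x hx w hw := (h.opn x hx.1 w hw.1).and (Filter.Eventually.of_forall fun t => by
    have h1 : ℓ x = 0 := hx.2
    have h2 : ℓ.linear w = 0 := hw.2
    simp [aff_line, h1, h2])

open Classical in
/-- Signed dimension. -/
def chi (C : Set (V n)) : ℝ := if C.Nonempty then (-1) ^ dimS C else 0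

lemma chi_empty : chi (∅ : Set (V n)) = 0 := by simp [chi]

lemma finrank_inf_ker {W : Submodule ℝ (V n)} (φ : V n →ₗ[ℝ] ℝ) {w : V n} (hw : w ∈ W)
    (hφ : φ w ≠ 0) :
    Module.finrank ℝ W = Module.finrank ℝ (W ⊓ LinearMap.ker φ : Submodule ℝ (V n)) + 1 := by
  have h := LinearMap.finrank_range_add_finrank_ker (φ.domRestrict W)
  have hr : LinearMap.range (φ.domRestrict W) = ⊤ := by
    rw [LinearMap.range_eq_top]
    apply LinearMap.surjective
    intro h0
    exact hφ (by simpa using LinearMap.congr_fun h0 ⟨w, hw⟩)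
  have hk : Module.finrank ℝ (LinearMap.ker (φ.domRestrict W))
      = Module.finrank ℝ (W ⊓ LinearMap.ker φ : Submodule ℝ (V n)) := by
    have hmap : Submodule.map W.subtype (LinearMap.ker (φ.domRestrict W))
        = W ⊓ LinearMap.ker φ := by
      ext v
      simp [and_comm]
    rw [← Submodule.finrank_map_subtype_eq W, hmap]
  rw [hr, hk, finrank_top, Module.finrank_self] at h
  omega

lemma chi_split {C : Set (V n)} {W : Submodule ℝ (V n)} (h : RelOpen C W) (ℓ : AffForm n) :
    chi C = chi (C ∩ {x | ℓ x = 0}) + chi (C ∩ {x | ℓ x < 0}) + chi (C ∩ {x | 0 < ℓ x}) := by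
  by_cases hz : ∃ x ∈ C, ℓ x = 0
  · obtain ⟨x, hx, hx0⟩ := hz
    by_cases hl : ∃ w ∈ W, ℓ.linear w ≠ 0
    · obtain ⟨w, hw, hw0⟩ := hl
      have key : (C ∩ {x | ℓ x < 0}).Nonempty ∧ (C ∩ {x | 0 < ℓ x}).Nonempty := by
        obtain ⟨t, ht, h1, h2⟩ := exists_pos_of_ev (h.opn x hx w hw)
        have e1 := aff_line ℓ x w t
        have e2 := aff_line ℓ x w (-t)
        rw [hx0, zero_add] at e1 e2
        rcases lt_or_gt_of_ne hw0 with hn | hp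
        · exact ⟨⟨_, h1, by simp only [Set.mem_setOf_eq, e1]; nlinarith⟩,
            ⟨_, h2, by simp only [Set.mem_setOf_eq, e2]; nlinarith⟩⟩
        · exact ⟨⟨_, h2, by simp only [Set.mem_setOf_eq, e2]; nlinarith⟩,
            ⟨_, h1, by simp only [Set.mem_setOf_eq, e1]; nlinarith⟩⟩
      have n0 : (C ∩ {x | ℓ x = 0}).Nonempty := ⟨x, hx, hx0⟩
      have nC : C.Nonempty := ⟨x, hx⟩
      rw [chi, chi, chi, chi, if_pos nC, if_pos n0, if_pos key.1, if_pos key.2,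
        h.dimS_eq nC, (h.zero ℓ).dimS_eq n0, (h.neg ℓ).dimS_eq key.1, (h.pos ℓ).dimS_eq key.2,
        finrank_inf_ker ℓ.linear hw hw0]
      ring
    · push Not at hl
      have hc : ∀ y ∈ C, ℓ y = 0 := fun y hy => by
        have := hl _ (h.dir x hx y hy)
        rw [aff_sub] at this
        linarith
      have e1 : C ∩ {x | ℓ x = 0} = C := Set.inter_eq_left.2 hc
      have e2 : C ∩ {x | ℓ x < 0} = ∅ := by
        ext y; simp only [Set.mem_inter_iff, Set.mem_setOf_eq, Set.mem_empty_iff_false, iff_false]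
        rintro ⟨a, b⟩; linarith [hc y a]
      have e3 : C ∩ {x | 0 < ℓ x} = ∅ := by
        ext y; simp only [Set.mem_inter_iff, Set.mem_setOf_eq, Set.mem_empty_iff_false, iff_false]
        rintro ⟨a, b⟩; linarith [hc y a]
      rw [e1, e2, e3, chi_empty]; ring
  · push Not at hz
    have e1 : C ∩ {x | ℓ x = 0} = ∅ := by
      ext y; simp only [Set.mem_inter_iff, Set.mem_setOf_eq, Set.mem_empty_iff_false, iff_false]
      rintro ⟨a, b⟩; exact hz y a b
    have hno : ∀ x ∈ C, ∀ y ∈ C, ℓ x < 0 → 0 < ℓ y → False := by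
      intro x hx y hy h1 h2
      have hd : 0 < ℓ y - ℓ x := by linarith
      have ht0 : 0 ≤ -ℓ x / (ℓ y - ℓ x) := div_nonneg (by linarith) hd.le
      have ht1 : -ℓ x / (ℓ y - ℓ x) ≤ 1 := by rw [div_le_one hd]; linarith
      refine hz _ (h.conv.add_smul_sub_mem hx hy ⟨ht0, ht1⟩) ?_
      rw [aff_line, aff_sub, div_mul_cancel₀ _ hd.ne']
      ring
    by_cases hneg : ∃ x ∈ C, ℓ x < 0
    · obtain ⟨x, hx, hx0⟩ := hneg
      have hc : ∀ y ∈ C, ℓ y < 0 := fun y hy => by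
        rcases lt_trichotomy (ℓ y) 0 with a | a | a
        · exact a
        · exact absurd a (hz y hy)
        · exact (hno x hx y hy hx0 a).elim
      have e2 : C ∩ {x | ℓ x < 0} = C := Set.inter_eq_left.2 hc
      have e3 : C ∩ {x | 0 < ℓ x} = ∅ := by
        ext y; simp only [Set.mem_inter_iff, Set.mem_setOf_eq, Set.mem_empty_iff_false, iff_false]
        rintro ⟨a, b⟩; linarith [hc y a]
      rw [e1, e2, e3, chi_empty]; ring
    · push Not at hneg
      have e2 : C ∩ {x | ℓ x < 0} = ∅ := by
        ext y; simp only [Set.mem_inter_iff, Set.mem_setOf_eq, Set.mem_empty_iff_false, iff_false]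
        rintro ⟨a, b⟩; linarith [hneg y a]
      have e3 : C ∩ {x | 0 < ℓ x} = C :=
        Set.inter_eq_left.2 fun y hy => lt_of_le_of_ne (hneg y hy) (hz y hy).symm
      rw [e1, e2, e3, chi_empty]; ring

lemma chi_split_sign {C : Set (V n)} {W : Submodule ℝ (V n)} (h : RelOpen C W) (ℓ : AffForm n) :
    chi C = ∑ s : SignType, chi (C ∩ {x | SignType.sign (ℓ x) = s}) := by
  have hu : (Finset.univ : Finset SignType) = {0, -1, 1} := rfl
  rw [hu, Finset.sum_insert (by decide), Finset.sum_insert (by decide), Finset.sum_singleton,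
    chi_split h ℓ, add_assoc]
  simp only [sign_eq_zero_iff, sign_eq_neg_one_iff, sign_eq_one_iff]

lemma RelOpen.sign {C : Set (V n)} {W : Submodule ℝ (V n)} (h : RelOpen C W) (ℓ : AffForm n)
    (s : SignType) : ∃ W', RelOpen (C ∩ {x | SignType.sign (ℓ x) = s}) W' := by
  have hs : s = 0 ∨ s = -1 ∨ s = 1 := by cases s <;> decide
  rcases hs with rfl | rfl | rfl
  · simp only [sign_eq_zero_iff]; exact ⟨_, h.zero ℓ⟩
  · simp only [sign_eq_neg_one_iff]; exact ⟨_, h.neg ℓ⟩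
  · simp only [sign_eq_one_iff]; exact ⟨_, h.pos ℓ⟩

lemma chi_sum_fin (m : ℕ) (f : Fin m → AffForm n) :
    ∀ (C : Set (V n)) (W : Submodule ℝ (V n)), RelOpen C W →
    chi C = ∑ σ : Fin m → SignType, chi (C ∩ {x | ∀ i, SignType.sign (f i x) = σ i}) := by
  induction m with
  | zero => intro C W h; simp
  | succ m ih =>
    intro C W h
    rw [chi_split_sign h (f 0), ← (Fin.consEquiv (fun _ => SignType)).sum_comp,
      Fintype.sum_prod_type]
    refine Finset.sum_congr rfl fun s _ => ?_
    obtain ⟨W', h'⟩ := h.sign (f 0) s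
    rw [ih (fun i => f i.succ) _ W' h']
    refine Finset.sum_congr rfl fun σ _ => ?_
    congr 1
    ext x
    simp [Fin.consEquiv, Fin.forall_fin_succ, and_assoc]

lemma chi_sum {ι : Type*} [Fintype ι] [DecidableEq ι] (f : ι → AffForm n)
    {C : Set (V n)} {W : Submodule ℝ (V n)} (h : RelOpen C W) :
    chi C = ∑ σ : ι → SignType, chi (C ∩ {x | ∀ i, SignType.sign (f i x) = σ i}) := by
  let e := Fintype.equivFin ι
  rw [chi_sum_fin _ (fun i => f (e.symm i)) C W h,
    ← (Equiv.arrowCongr e (Equiv.refl SignType)).sum_comp]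
  refine Finset.sum_congr rfl fun σ _ => ?_
  congr 1
  ext x
  simp only [Set.mem_inter_iff, Set.mem_setOf_eq, and_congr_right_iff]
  intro _
  rw [e.symm.forall_congr_left]
  simp

lemma flat_relOpen (X : Flat 𝒜) : ∃ W, RelOpen X.1 W := by
  obtain ⟨Z, hne, P, hP⟩ := X
  have hm : ∀ x, x ∈ Z ↔ ∀ ℓ : Idx 𝒜, P ℓ → ℓ.1 x = 0 := by
    intro x; rw [hP]; simp [hypSet]
  refine ⟨⨅ ℓ : Idx 𝒜, ⨅ _ : P ℓ, LinearMap.ker ℓ.1.linear, ?_, ?_, ?_⟩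
  · show Convex ℝ Z
    rw [hP]
    exact convex_iInter fun ℓ => convex_iInter fun _ =>
      (convex_singleton (0 : ℝ)).affine_preimage ℓ.1
  · intro x hx y hy
    simp only [Submodule.mem_iInf, LinearMap.mem_ker]
    intro ℓ hℓ
    rw [aff_sub, (hm x).1 hx ℓ hℓ, (hm y).1 hy ℓ hℓ, sub_zero]
  · intro x hx w hw
    simp only [Submodule.mem_iInf, LinearMap.mem_ker] at hw
    refine Filter.Eventually.of_forall fun t => (hm _).2 fun ℓ hℓ => ?_
    rw [aff_line, (hm x).1 hx ℓ hℓ, hw ℓ hℓ]; simp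

lemma face_dim_ge (F : Face 𝒜) : dimS (supp 𝒜 F).1 ≤ dimS (Face.carrier 𝒜 F) := by
  apply Submodule.finrank_mono
  obtain ⟨x, hx⟩ := F.nonempty
  have hm : ∀ y, y ∈ (supp 𝒜 F).1 ↔ ∀ ℓ : Idx 𝒜, F.sgn ℓ = 0 → ℓ.1 y = 0 := by
    intro y; simp [supp, hypSet]
  have hxs : x ∈ (supp 𝒜 F).1 := (hm x).2 fun ℓ hℓ => by
    have := hx ℓ
    rwa [hℓ, sign_eq_zero_iff] at this
  rw [vectorSpan_eq_span_vsub_set_right ℝ hxs, Submodule.span_le]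
  rintro _ ⟨y, hy, rfl⟩
  refine mem_span_of_ev (x := x) hx ?_
  have : ∀ ℓ : Idx 𝒜, ∀ᶠ t in nhds (0 : ℝ),
      SignType.sign (ℓ.1 (x + t • (y -ᵥ x))) = F.sgn ℓ := by
    intro ℓ
    rcases lt_trichotomy (ℓ.1 x) 0 with a | a | a
    · filter_upwards [(tendsto_line ℓ.1 x (y -ᵥ x)).eventually_lt_const a] with t ht
      rw [← hx ℓ, sign_neg a, sign_neg ht]
    · refine Filter.Eventually.of_forall fun t => ?_
      have h0 : F.sgn ℓ = 0 := by rw [← hx ℓ, a, sign_zero]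
      rw [aff_line, vsub_eq_sub, aff_sub, a, (hm y).1 hy ℓ h0, h0]
      simp
    · filter_upwards [(tendsto_line ℓ.1 x (y -ᵥ x)).eventually_const_lt a] with t ht
      rw [← hx ℓ, sign_pos a, sign_pos ht]
  exact Filter.eventually_all.2 this

lemma exists_min_flat (X : Flat 𝒜) : ∃ M : Flat 𝒜, M ≤ X ∧ IsMin M := by
  obtain ⟨M, h1, h2⟩ := Finite.exists_le_minimal (p := fun _ : Flat 𝒜 => True) (a := X) trivial
  exact ⟨M, h1, minimal_true.1 h2⟩

lemma flat_dim_ge (d : ℕ) (hd : ∀ X : Flat 𝒜, IsMin X → dimS X.1 = d) (X : Flat 𝒜) :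
    d ≤ dimS X.1 := by
  obtain ⟨M, h1, h2⟩ := exists_min_flat 𝒜 X
  rw [← hd M h2]
  exact Submodule.finrank_mono (vectorSpan_mono ℝ h1)

lemma supp_subset_iff (F : Face 𝒜) (X : Flat 𝒜) :
    (supp 𝒜 F).1 ⊆ X.1 ↔ (X.1 ∩ faceSet 𝒜 F.sgn).Nonempty := by
  obtain ⟨Z, hne, P, hP⟩ := X
  have hmZ : ∀ x, x ∈ Z ↔ ∀ ℓ : Idx 𝒜, P ℓ → ℓ.1 x = 0 := by
    intro x; rw [hP]; simp [hypSet]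
  have hm : ∀ y, y ∈ (supp 𝒜 F).1 ↔ ∀ ℓ : Idx 𝒜, F.sgn ℓ = 0 → ℓ.1 y = 0 := by
    intro y; simp [supp, hypSet]
  constructor
  · intro h
    obtain ⟨x, hx⟩ := F.nonempty
    refine ⟨x, h ((hm x).2 fun ℓ hℓ => ?_), hx⟩
    have := hx ℓ
    rwa [hℓ, sign_eq_zero_iff] at this
  · rintro ⟨x, hxZ, hx⟩ y hy
    refine (hmZ y).2 fun ℓ hℓ => (hm y).1 hy ℓ ?_
    rw [← hx ℓ, (hmZ x).1 hxZ ℓ hℓ, sign_zero]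

lemma face_subset_supp (F : Face 𝒜) : faceSet 𝒜 F.sgn ⊆ (supp 𝒜 F).1 := by
  intro x hx
  simp only [supp, Set.mem_iInter, Set.mem_setOf_eq, hypSet]
  intro ℓ hℓ
  have := hx ℓ
  rwa [hℓ, sign_eq_zero_iff] at this

lemma neg_one_pow_sub' {a d : ℕ} (h : d ≤ a) : (-1 : ℝ) ^ (a - d) = (-1) ^ d * (-1) ^ a := by
  obtain ⟨k, rfl⟩ := Nat.exists_eq_add_of_le h
  rw [Nat.add_sub_cancel_left, ← pow_add, ← add_assoc, pow_add _ (d + d),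
    Even.neg_one_pow ⟨d, rfl⟩, one_mul]

/-- **Proposition.** The Takeuchi element `τ = Σ_F (-1)^{rk F} H_F` (sum over all
faces) is characteristic of parameter `-1`. -/
theorem takeuchi_isCharacteristic {n : ℕ} (𝒜 : Finset (AffForm n))
    (h𝒜 : ∀ ℓ ∈ 𝒜, ℓ.linear ≠ 0)
    (d : ℕ) (hd : ∀ X : Flat 𝒜, IsMin X → dimS X.1 = d) :
    IsCharacteristic 𝒜 d
      (fun F => (-1 : ℝ) ^ (dimS (Face.carrier 𝒜 F) - d)) (-1) := by
  classical
  intro X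
  obtain ⟨W, hW⟩ := flat_relOpen 𝒜 X
  have hsum := chi_sum (fun ℓ : Idx 𝒜 => ℓ.1) hW
  have hX : chi X.1 = (-1) ^ dimS X.1 := if_pos X.2.1
  have hinj : Function.Injective (Face.sgn : Face 𝒜 → _) := fun F G h => Face.ext h
  rw [neg_one_pow_sub' (flat_dim_ge 𝒜 d hd X), ← hX, hsum, Finset.mul_sum]
  have h0 : ∀ σ : Idx 𝒜 → SignType, σ ∉ (Finset.univ.image (Face.sgn : Face 𝒜 → _)) →
      (-1 : ℝ) ^ d * chi (X.1 ∩ {x | ∀ i : Idx 𝒜, SignType.sign (i.1 x) = σ i}) = 0 := by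
    intro σ hσ
    have : ¬ (X.1 ∩ {x | ∀ i : Idx 𝒜, SignType.sign (i.1 x) = σ i}).Nonempty := by
      rintro ⟨x, -, hx⟩
      exact hσ (Finset.mem_image.2 ⟨⟨σ, ⟨x, hx⟩⟩, Finset.mem_univ _, rfl⟩)
    rw [chi, if_neg this, mul_zero]
  rw [← Finset.sum_subset (Finset.subset_univ (Finset.univ.image (Face.sgn : Face 𝒜 → _)))
    (fun σ _ hσ => h0 σ hσ), Finset.sum_image (fun _ _ _ _ h => hinj h)]
  refine Finset.sum_congr rfl fun F _ => ?_
  change _ = (-1 : ℝ) ^ d * chi (X.1 ∩ faceSet 𝒜 F.sgn)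
  by_cases h : (supp 𝒜 F).1 ⊆ X.1
  · rw [if_pos h]
    beta_reduce
    rw [neg_one_pow_sub' ((flat_dim_ge 𝒜 d hd _).trans (face_dim_ge 𝒜 F)), chi,
      if_pos ((supp_subset_iff 𝒜 F X).1 h),
      Set.inter_eq_right.2 ((face_subset_supp 𝒜 F).trans h)]
    rfl
  · rw [if_neg h, chi, if_neg (fun h' => h ((supp_subset_iff 𝒜 F X).2 h')), mul_zero]

end CharElts
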